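/- Let C be an abelian category admitting a derived category D(C). Let K_0, K_1, …, K_n be cochain complexes over C and let f_i : K_i ⟶ K_{i+1} (0 ≤ i < n) be morphisms in the derived category D(C). Then there exist cochain complexes L_0, L_1, …, L_n, monomorphisms of cochain complexes g_i : L_i ⟶ L_{i+1} (0 ≤ i < n), and isomorphisms σ_i : K_i ≅ L_i in D(C) (0 ≤ i ≤ n) such that for every i one has σ_{i+1} ∘ f_i = (image of g_i in D(C)) ∘ σ_i in D(C). In other words, any finite chain of composable morphisms in the derived category can be represented, up to isomorphism in D(C), by an honest chain of injective morphisms of complexes, i.e., by a filtered complex. -/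

import Mathlib

open CategoryTheory Limits

/-- The mapping cone of an identity is zero in the derived category. -/
lemma aux_isZero {C : Type*} [Category C] [Abelian C] [HasDerivedCategory C]
    (X : CochainComplex C ℤ) :
    IsZero (DerivedCategory.Q.obj (CochainComplex.mappingCone (𝟙 X))) := by
  have h := Pretriangulated.Triangle.isZero₃_of_isIso₁ _
    (DerivedCategory.mappingCone_triangle_distinguished (𝟙 X))
    (inferInstanceAs (IsIso (DerivedCategory.Q.map (𝟙 X))))
  exact h

/-- One step: represent a morphism out of `X` by a monomorphism of complexes. -/
lemma aux_step {C : Type*} [Category C] [Abelian C] [HasDerivedCategory C]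
    (X Y : CochainComplex C ℤ) (f : DerivedCategory.Q.obj X ⟶ DerivedCategory.Q.obj Y) :
    ∃ (L : CochainComplex C ℤ) (g : X ⟶ L)
      (σ : DerivedCategory.Q.obj Y ≅ DerivedCategory.Q.obj L),
      Mono g ∧ f ≫ σ.hom = DerivedCategory.Q.map g := by
  obtain ⟨Y', g, s, hs, rfl⟩ := DerivedCategory.left_fac f
  let Z := CochainComplex.mappingCone (𝟙 X)
  have hZ : IsZero (DerivedCategory.Q.obj Z) := aux_isZero X
  let p : Z ⊞ Y' ⟶ Y' := biprod.snd
  have hp : IsIso (DerivedCategory.Q.map p) := by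
    refine ⟨DerivedCategory.Q.map biprod.inr, ?_, ?_⟩
    · have h0 : DerivedCategory.Q.map (biprod.fst ≫ biprod.inl : Z ⊞ Y' ⟶ Z ⊞ Y') = 0 := by
        rw [Functor.map_comp]
        rw [hZ.eq_of_src (DerivedCategory.Q.map biprod.inl) 0, comp_zero]
      rw [← Functor.map_comp, ← CategoryTheory.Functor.map_id, ← biprod.total, Functor.map_add, h0, zero_add]
    · rw [← Functor.map_comp, ← CategoryTheory.Functor.map_id, biprod.inr_snd]
  have hm : Mono (CochainComplex.mappingCone.inr (𝟙 X)) := by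
    have (i : ℤ) : Mono ((CochainComplex.mappingCone.inr (𝟙 X)).f i) :=
      mono_of_mono_fac (CochainComplex.mappingCone.inr_f_snd_v (𝟙 X) i)
    exact HomologicalComplex.mono_of_mono_f _ this
  refine ⟨Z ⊞ Y', biprod.lift (CochainComplex.mappingCone.inr (𝟙 X)) g,
    asIso (DerivedCategory.Q.map s) ≪≫ (asIso (DerivedCategory.Q.map p)).symm, ?_, ?_⟩
  · exact mono_of_mono_fac (biprod.lift_fst (CochainComplex.mappingCone.inr (𝟙 X)) g)
  · rw [← cancel_mono (DerivedCategory.Q.map p), ← Functor.map_comp]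
    simp [p]

theorem stmt4 {C : Type*} [Category C] [Abelian C] [HasDerivedCategory C]
    (n : ℕ) (K : Fin (n + 1) → CochainComplex C ℤ)
    (f : ∀ i : Fin n,
      DerivedCategory.Q.obj (K i.castSucc) ⟶ DerivedCategory.Q.obj (K i.succ)) :
    ∃ (L : Fin (n + 1) → CochainComplex C ℤ)
      (g : ∀ i : Fin n, L i.castSucc ⟶ L i.succ)
      (σ : ∀ i : Fin (n + 1), DerivedCategory.Q.obj (K i) ≅ DerivedCategory.Q.obj (L i)),
      (∀ i : Fin n, Mono (g i)) ∧
      (∀ i : Fin n,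
        f i ≫ (σ i.succ).hom = (σ i.castSucc).hom ≫ DerivedCategory.Q.map (g i)) := by
  let P : Fin (n + 1) → Type _ := fun i =>
    Σ L : CochainComplex C ℤ, (DerivedCategory.Q.obj (K i) ≅ DerivedCategory.Q.obj L)
  have step : ∀ (i : Fin n) (a : P i.castSucc), ∃ b : P i.succ, ∃ g : a.1 ⟶ b.1, Mono g ∧
      f i ≫ b.2.hom = a.2.hom ≫ DerivedCategory.Q.map g := by
    intro i a
    obtain ⟨L, g, σ, hg, h⟩ := aux_step a.1 (K i.succ) (a.2.inv ≫ f i)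
    refine ⟨⟨L, σ⟩, g, hg, ?_⟩
    rw [← h]
    simp
  choose next hnext using step
  let D : ∀ i, P i := Fin.induction ⟨K 0, Iso.refl _⟩ next
  have hD : ∀ i : Fin n, ∃ g : (D i.castSucc).1 ⟶ (D i.succ).1, Mono g ∧
      f i ≫ (D i.succ).2.hom = (D i.castSucc).2.hom ≫ DerivedCategory.Q.map g := by
    intro i
    have : D i.succ = next i (D i.castSucc) := Fin.induction_succ _ _ i
    rw [this]
    exact hnext i _
  choose g hg h using hD
  exact ⟨fun i => (D i).1, g, fun i => (D i).2, hg, h⟩
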